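/- On ℝ³ with coordinates (x,y,z) (with cos y ≠ 0 and sin y ≠ 0), consider the de Sitter metric g = κ²(−cos²y·dx² + dy² + sin²y·dz²) for a constant κ > 0, which has scalar curvature τ = 6/κ². For any constants c₁, c₂ and any Λ ∈ ℝ, the function h(x,y,z) = −κ²Λ/2 + sin(y)(c₁cos(z) + c₂sin(z)) satisfies the vacuum weighted Einstein field equation h·ρ − Hes_h + (Δh + Λ)g = 0; moreover ‖∇h‖² = (1/κ²)(cos²(y)(c₂sin z + c₁cos z)² + (c₂cos z − c₁sin z)²) ≥ 0, so ∇h is spacelike or lightlike. -/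

import Mathlib

noncomputable section
open Matrix

/-- Points of the coordinate space `ℝⁿ`. -/
abbrev Pt (n : ℕ) := Fin n → ℝ

/-- Partial derivative `∂_i f` in the `i`-th coordinate direction. -/
def pd {n : ℕ} (i : Fin n) (f : Pt n → ℝ) (p : Pt n) : ℝ :=
  fderiv ℝ f p (Pi.single i 1)

/-- The inverse metric `g^{ij}` of a metric `g` given as a matrix of components. -/
def ginv {n : ℕ} (g : Pt n → Fin n → Fin n → ℝ) (p : Pt n) : Matrix (Fin n) (Fin n) ℝ :=
  (Matrix.of (g p))⁻¹

/-- Christoffel symbols `Γ^k_{ij}` of the Levi-Civita connection of `g`. -/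
def chr {n : ℕ} (g : Pt n → Fin n → Fin n → ℝ) (k i j : Fin n) (p : Pt n) : ℝ :=
  (1/2) * ∑ l, ginv g p k l *
    (pd i (fun q => g q l j) p + pd j (fun q => g q l i) p - pd l (fun q => g q i j) p)

/-- Components `R_{ij}` of the Ricci tensor of `g`. -/
def RicciT {n : ℕ} (g : Pt n → Fin n → Fin n → ℝ) (i j : Fin n) (p : Pt n) : ℝ :=
  (∑ k, pd k (fun q => chr g k i j q) p) - (∑ k, pd j (fun q => chr g k i k q) p)
  + (∑ k, ∑ l, chr g k k l p * chr g l i j p) - (∑ k, ∑ l, chr g k j l p * chr g l i k p)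

/-- Scalar curvature `τ = g^{ij} R_{ij}` of `g`. -/
def Scal {n : ℕ} (g : Pt n → Fin n → Fin n → ℝ) (p : Pt n) : ℝ :=
  ∑ i, ∑ j, ginv g p i j * RicciT g i j p

/-- Components of the Hessian `Hes_f` of a function `f` with respect to `g`. -/
def Hess {n : ℕ} (g : Pt n → Fin n → Fin n → ℝ) (f : Pt n → ℝ) (i j : Fin n) (p : Pt n) : ℝ :=
  pd i (fun q => pd j f q) p - ∑ k, chr g k i j p * pd k f p

/-- Laplacian `Δf = g^{ij}(Hes_f)_{ij}`. -/
def Lap {n : ℕ} (g : Pt n → Fin n → Fin n → ℝ) (f : Pt n → ℝ) (p : Pt n) : ℝ :=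
  ∑ i, ∑ j, ginv g p i j * Hess g f i j p

/-- Components of the gradient `∇f = g^{ij} ∂_j f ∂_i`. -/
def gradV {n : ℕ} (g : Pt n → Fin n → Fin n → ℝ) (f : Pt n → ℝ) (p : Pt n) (i : Fin n) : ℝ :=
  ∑ j, ginv g p i j * pd j f p

/-- `‖∇f‖² = g(∇f,∇f) = g^{ij} ∂_i f ∂_j f`. -/
def gradNorm2 {n : ℕ} (g : Pt n → Fin n → Fin n → ℝ) (f : Pt n → ℝ) (p : Pt n) : ℝ :=
  ∑ i, ∑ j, ginv g p i j * pd i f p * pd j f p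

/-- The vacuum weighted Einstein field equation
`h·ρ − Hes_h + (Δh + Λ)g = 0` at the point `p`. -/
def WEFEat {n : ℕ} (g : Pt n → Fin n → Fin n → ℝ) (h : Pt n → ℝ) (Λ : ℝ) (p : Pt n) : Prop :=
  ∀ i j, h p * RicciT g i j p - Hess g h i j p + (Lap g h p + Λ) * g p i j = 0

/-- The Ricci operator `Ric = g^{-1}·ρ` as a matrix (column `j` lists the
components of `Ric ∂_j`). -/
def RicOpM {n : ℕ} (g : Pt n → Fin n → Fin n → ℝ) (p : Pt n) : Matrix (Fin n) (Fin n) ℝ :=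
  Matrix.of fun i j => ∑ k, ginv g p i k * RicciT g k j p

/-- The `k`-th component of the covariant derivative `∇_{∂_i} V`. -/
def covD {n : ℕ} (g : Pt n → Fin n → Fin n → ℝ) (V : Pt n → Fin n → ℝ) (i k : Fin n)
    (p : Pt n) : ℝ :=
  pd i (fun q => V q k) p + ∑ m, chr g k i m p * V p m

/-- Components `R^l_{ijk}` of the (1,3)-curvature tensor:
`R(∂_i,∂_j)∂_k = R^l_{ijk} ∂_l`. -/
def RiemUp {n : ℕ} (g : Pt n → Fin n → Fin n → ℝ) (l i j k : Fin n) (p : Pt n) : ℝ :=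
  pd i (fun q => chr g l j k q) p - pd j (fun q => chr g l i k q) p
  + (∑ m, chr g l i m p * chr g m j k p) - (∑ m, chr g l j m p * chr g m i k p)

/-- The (0,4)-curvature tensor `R(∂_i,∂_j,∂_k,∂_l) = g(R(∂_i,∂_j)∂_k, ∂_l)`. -/
def RiemLow {n : ℕ} (g : Pt n → Fin n → Fin n → ℝ) (i j k l : Fin n) (p : Pt n) : ℝ :=
  ∑ m, g p l m * RiemUp g m i j k p

/-- A symmetric matrix of Lorentzian signature `(−,+,+)`. -/
def IsLorentz3 (A : Matrix (Fin 3) (Fin 3) ℝ) : Prop :=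
  A.IsSymm ∧ ∃ P : Matrix (Fin 3) (Fin 3) ℝ, IsUnit P.det ∧
    Pᵀ * A * P = Matrix.diagonal ![(-1 : ℝ), 1, 1]

/-- Jacobian matrix of a coordinate change `ψ`. -/
def jac {n : ℕ} (ψ : Pt n → Pt n) (q : Pt n) : Matrix (Fin n) (Fin n) ℝ :=
  Matrix.of fun i j => pd j (fun r => ψ r i) q

/-- Pullback `ψ^*g` of the metric `g` under the coordinate change `ψ`. -/
def pullback {n : ℕ} (g : Pt n → Fin n → Fin n → ℝ) (ψ : Pt n → Pt n) (q : Pt n) :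
    Matrix (Fin n) (Fin n) ℝ :=
  (jac ψ q)ᵀ * Matrix.of (g (ψ q)) * jac ψ q

/-- The 3-dimensional plane-wave metric `dv(2du − (α''(v)/α(v))x² dv) + dx²`
in coordinates `(u,v,x) = (q 0, q 1, q 2)`. -/
def planeWaveM (α : ℝ → ℝ) (q : Pt 3) : Matrix (Fin 3) (Fin 3) ℝ :=
  Matrix.of fun i j =>
    if i = 0 ∧ j = 1 then 1 else if i = 1 ∧ j = 0 then 1
    else if i = 1 ∧ j = 1 then -(deriv (deriv α) (q 1) / α (q 1)) * (q 2)^2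
    else if i = 2 ∧ j = 2 then 1 else 0


/-- The de Sitter metric `κ²(−cos²y dx² + dy² + sin²y dz²)` in coordinates
`(x,y,z) = (p 0, p 1, p 2)`. -/
def deSitterM (κ : ℝ) (p : Pt 3) : Fin 3 → Fin 3 → ℝ := fun i j =>
  if i = 0 ∧ j = 0 then -(κ^2 * Real.cos (p 1)^2)
  else if i = 1 ∧ j = 1 then κ^2
  else if i = 2 ∧ j = 2 then κ^2 * Real.sin (p 1)^2 else 0

/-!
The de Sitter metric is diagonal with coefficients `Eₖ` depending on `y` alone, so its Christoffel
symbols and its Ricci tensor are explicit in terms of `Lₖ = Eₖ' / (2 Eₖ)`. Here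
`L = (-tan y, 0, cot y)`; since `L' = -1 - L²` for the two nonzero entries and `tan y * cot y = 1`,
the metric is Einstein with `ρ = (2 / κ²) g`. If `ψ'' = -ψ`, then `h = a + sin y * ψ(z)` satisfies
`Hes_h = -((h - a) / κ²) g`. Hence both `ρ` and `Hes_h` are multiples of `g`, and the field equation
reduces to the scalar condition `2 a / κ² + Λ = 0`, which forces `a = -κ² Λ / 2`.
-/

section PartialDerivatives

open Topology

variable {n : ℕ} {p : Pt n}

lemma pd_congr {f₁ f₂ : Pt n → ℝ} (i : Fin n) (h : f₁ =ᶠ[𝓝 p] f₂) : pd i f₁ p = pd i f₂ p := by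
  rw [pd, pd, h.fderiv_eq]

lemma pd_const (i : Fin n) (c : ℝ) (p : Pt n) : pd i (fun _ => c) p = 0 := by
  simp [pd]

lemma hasFDerivAt_comp_apply {φ : ℝ → ℝ} {φ' : ℝ} (k : Fin n) (hφ : HasDerivAt φ φ' (p k)) :
    HasFDerivAt (fun q : Pt n => φ (q k)) (φ' • ContinuousLinearMap.proj (R := ℝ) k) p :=
  hφ.comp_hasFDerivAt p (ContinuousLinearMap.proj (R := ℝ) (φ := fun _ : Fin n => ℝ) k).hasFDerivAt

lemma pd_comp_apply {φ : ℝ → ℝ} {φ' : ℝ} (i k : Fin n) (hφ : HasDerivAt φ φ' (p k)) :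
    pd i (fun q => φ (q k)) p = if i = k then φ' else 0 := by
  rw [pd, (hasFDerivAt_comp_apply k hφ).fderiv]
  simp [Pi.single_apply, eq_comm]

lemma pd_const_add_mul {φ ψ : ℝ → ℝ} {φ' ψ' : ℝ} (a : ℝ) (i k l : Fin n)
    (hφ : HasDerivAt φ φ' (p k)) (hψ : HasDerivAt ψ ψ' (p l)) :
    pd i (fun q => a + φ (q k) * ψ (q l)) p =
      (if i = k then φ' * ψ (p l) else 0) + if i = l then φ (p k) * ψ' else 0 := by
  have h := ((hasFDerivAt_comp_apply k hφ).mul (hasFDerivAt_comp_apply l hψ)).const_add a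
  rw [pd, show fderiv ℝ (fun q : Pt n => a + φ (q k) * ψ (q l)) p = _ from h.fderiv]
  simp [Pi.single_apply, eq_comm, mul_comm, add_comm]

end PartialDerivatives

section EinsteinMetrics

variable {n : ℕ} {g : Pt n → Fin n → Fin n → ℝ} {p : Pt n}

lemma sum_ginv_mul_metric (hsymm : (Matrix.of (g p)).IsSymm)
    (hdet : IsUnit (Matrix.of (g p)).det) : ∑ i, ∑ j, ginv g p i j * g p i j = n := by
  calc ∑ i, ∑ j, ginv g p i j * g p i j
      = (ginv g p * Matrix.of (g p)).trace := by
        simp only [Matrix.trace, Matrix.diag_apply, Matrix.mul_apply]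
        exact Finset.sum_congr rfl fun i _ => Finset.sum_congr rfl fun j _ =>
          congrArg (ginv g p i j * ·) (hsymm.apply i j).symm
    _ = n := by rw [ginv, Matrix.nonsing_inv_mul _ hdet, Matrix.trace_one, Fintype.card_fin]

lemma sum_ginv_mul_of_eq_smul_metric (hsymm : (Matrix.of (g p)).IsSymm)
    (hdet : IsUnit (Matrix.of (g p)).det) {T : Fin n → Fin n → ℝ} {c : ℝ}
    (hT : ∀ i j, T i j = c * g p i j) : ∑ i, ∑ j, ginv g p i j * T i j = n * c := by
  rw [← sum_ginv_mul_metric hsymm hdet]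
  simp only [hT, Finset.sum_mul]
  exact Finset.sum_congr rfl fun i _ => Finset.sum_congr rfl fun j _ => by ring

lemma WEFEat_of_einstein (hsymm : (Matrix.of (g p)).IsSymm)
    (hdet : IsUnit (Matrix.of (g p)).det) {h : Pt n → ℝ} {Λ r s : ℝ}
    (hRicci : ∀ i j, RicciT g i j p = r * g p i j)
    (hHess : ∀ i j, Hess g h i j p = s * g p i j)
    (htrace : h p * r + (n - 1) * s + Λ = 0) : WEFEat g h Λ p := by
  have hLap : Lap g h p = n * s := sum_ginv_mul_of_eq_smul_metric hsymm hdet hHess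
  intro i j
  rw [hRicci, hHess, hLap]
  linear_combination g p i j * htrace

end EinsteinMetrics

/-- The diagonal metric `∑ₖ Eₖ(y) dxₖ²`, whose coefficients depend on the single coordinate
`y = xₘ`. -/
def diagM {n : ℕ} (m : Fin n) (E : Fin n → ℝ → ℝ) (p : Pt n) (i j : Fin n) : ℝ :=
  if i = j then E i (p m) else 0

/-- The Christoffel symbols `Γᵏᵢⱼ` of `diagM m E` as functions of `y = xₘ`, where
`Lₖ = Eₖ' / (2 Eₖ)` is half the logarithmic derivative of `Eₖ`. -/
def diagChr {n : ℕ} (m : Fin n) (E L : Fin n → ℝ → ℝ) (k i j : Fin n) (y : ℝ) : ℝ :=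
  (if i = m ∧ j = k then L k y else 0) + (if j = m ∧ i = k then L k y else 0)
    - if k = m ∧ i = j then E i y / E m y * L i y else 0

section DiagonalMetrics

open Topology

variable {n : ℕ} {m : Fin n} {E L : Fin n → ℝ → ℝ} {p : Pt n}

lemma of_diagM (m : Fin n) (E : Fin n → ℝ → ℝ) (p : Pt n) :
    Matrix.of (diagM m E p) = Matrix.diagonal fun k => E k (p m) := rfl

lemma isSymm_diagM (m : Fin n) (E : Fin n → ℝ → ℝ) (p : Pt n) :
    (Matrix.of (diagM m E p)).IsSymm :=
  Matrix.isSymm_diagonal _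

lemma isUnit_det_diagM (hE : ∀ k, E k (p m) ≠ 0) : IsUnit (Matrix.of (diagM m E p)).det := by
  rw [of_diagM, Matrix.det_diagonal, isUnit_iff_ne_zero]
  exact Finset.prod_ne_zero_iff.mpr fun k _ => hE k

lemma ginv_diagM (hE : ∀ k, E k (p m) ≠ 0) :
    ginv (diagM m E) p = Matrix.diagonal fun k => (E k (p m))⁻¹ := by
  rw [ginv, of_diagM]
  refine Matrix.inv_eq_right_inv ?_
  simp [Matrix.diagonal_mul_diagonal, hE]

lemma gradNorm2_diagM (hE : ∀ k, E k (p m) ≠ 0) (f : Pt n → ℝ) :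
    gradNorm2 (diagM m E) f p = ∑ k, pd k f p ^ 2 / E k (p m) := by
  simp only [gradNorm2, ginv_diagM hE, Matrix.diagonal_apply, ite_mul, zero_mul,
    Finset.sum_ite_eq, Finset.mem_univ, if_true]
  exact Finset.sum_congr rfl fun k _ => by ring

lemma pd_diagM (hL : ∀ k, HasDerivAt (E k) (2 * E k (p m) * L k (p m)) (p m)) (l i j : Fin n) :
    pd l (fun q => diagM m E q i j) p =
      if l = m ∧ i = j then 2 * E i (p m) * L i (p m) else 0 := by
  by_cases hij : i = j
  · simpa [diagM, hij] using pd_comp_apply l m (hL j)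
  · simp [diagM, hij, pd_const]

lemma chr_diagM (hE : ∀ k, E k (p m) ≠ 0)
    (hL : ∀ k, HasDerivAt (E k) (2 * E k (p m) * L k (p m)) (p m)) (k i j : Fin n) :
    chr (diagM m E) k i j p = diagChr m E L k i j (p m) := by
  have hk := hE k
  simp only [chr, ginv_diagM hE, pd_diagM hL, Matrix.diagonal_apply, ite_mul, zero_mul,
    Finset.sum_ite_eq, Finset.mem_univ, if_true, diagChr]
  have h_left : (if i = m ∧ k = j then 2 * E k (p m) * L k (p m) else 0) =
      2 * E k (p m) * if i = m ∧ j = k then L k (p m) else 0 := by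
    simp [eq_comm]
  have h_right : (if j = m ∧ k = i then 2 * E k (p m) * L k (p m) else 0) =
      2 * E k (p m) * if j = m ∧ i = k then L k (p m) else 0 := by
    simp [eq_comm]
  have h_diag : (if k = m ∧ i = j then 2 * E i (p m) * L i (p m) else 0) =
      2 * E k (p m) * if k = m ∧ i = j then E i (p m) / E m (p m) * L i (p m) else 0 := by
    split_ifs with h
    · obtain ⟨rfl, rfl⟩ := h
      field_simp
    · simp
  rw [h_left, h_right, h_diag]
  field_simp

lemma Hess_diagM (hE : ∀ k, E k (p m) ≠ 0)
    (hL : ∀ k, HasDerivAt (E k) (2 * E k (p m) * L k (p m)) (p m)) (f : Pt n → ℝ)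
    (i j : Fin n) :
    Hess (diagM m E) f i j p = pd i (fun q => pd j f q) p
      - (if i = m then L j (p m) * pd j f p else 0) - (if j = m then L i (p m) * pd i f p else 0)
      + if i = j then E i (p m) / E m (p m) * L i (p m) * pd m f p else 0 := by
  simp only [Hess, chr_diagM hE hL, diagChr, sub_mul, add_mul, ite_mul, zero_mul, ite_and,
    Finset.sum_sub_distrib, Finset.sum_add_distrib, Finset.sum_ite_irrel, Finset.sum_const_zero,
    Finset.sum_ite_eq, Finset.sum_ite_eq', Finset.mem_univ, if_true]
  ring

-- `hmixed` says that the mixed component `Hes(∂ₘ, ∂ₗ) = (φ' - Lₗ φ) ψ'` vanishes.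
lemma Hess_diagM_const_add_mul {φ φ' ψ ψ' : ℝ → ℝ} {φ'' ψ'' : ℝ} (a : ℝ) {l : Fin n} (hlm : l ≠ m)
    (hE : ∀ k, E k (p m) ≠ 0)
    (hL : ∀ k, HasDerivAt (E k) (2 * E k (p m) * L k (p m)) (p m))
    (hφ : ∀ y, HasDerivAt φ (φ' y) y) (hφ' : HasDerivAt φ' φ'' (p m))
    (hψ : ∀ z, HasDerivAt ψ (ψ' z) z) (hψ' : HasDerivAt ψ' ψ'' (p l))
    (hmixed : φ' (p m) = L l (p m) * φ (p m)) (i j : Fin n) :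
    Hess (diagM m E) (fun q => a + φ (q m) * ψ (q l)) i j p = if i = j then
      E i (p m) / E m (p m) * L i (p m) * (φ' (p m) * ψ (p l))
        + (if i = m then (φ'' - 2 * L m (p m) * φ' (p m)) * ψ (p l) else 0)
        + (if i = l then φ (p m) * ψ'' else 0)
      else 0 := by
  have hpd (k : Fin n) (q : Pt n) := pd_const_add_mul a k m l (hφ (q m)) (hψ (q l))
  have hpd_m (k : Fin n) : pd k (fun q => φ' (q m) * ψ (q l)) p =
      (if k = m then φ'' * ψ (p l) else 0) + if k = l then φ' (p m) * ψ' (p l) else 0 := by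
    simpa only [zero_add] using pd_const_add_mul 0 k m l hφ' (hψ (p l))
  have hpd_l (k : Fin n) : pd k (fun q => φ (q m) * ψ' (q l)) p =
      (if k = m then φ' (p m) * ψ' (p l) else 0) + if k = l then φ (p m) * ψ'' else 0 := by
    simpa only [zero_add] using pd_const_add_mul 0 k m l (hφ (p m)) hψ'
  have hml : m ≠ l := hlm.symm
  rw [Hess_diagM hE hL]
  simp only [hpd]
  by_cases hj : j = m
  · subst hj
    by_cases hi : i = j
    · subst hi
      simp only [if_true, hml, if_false, add_zero, hpd_m]
      ring
    · by_cases hil : i = l <;> simp [hi, hil, hlm, hml, hpd_m, hmixed, mul_assoc]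
  by_cases hjl : j = l
  · subst hjl
    by_cases hi : i = m
    · simp [hi, hml, hj, hpd_l, hmixed, mul_assoc]
    · by_cases hij : i = j <;> simp [hi, hij, hj, hml, hpd_l, add_comm]
  · simp +contextual [hj, hjl, hml, pd_const]

lemma diagChr_comm (E L : Fin n → ℝ → ℝ) (k i j : Fin n) (y : ℝ) :
    diagChr m E L k i j y = diagChr m E L k j i y := by
  by_cases hij : i = j
  · rw [hij]
  · simp [diagChr, hij, Ne.symm hij, add_comm]

lemma diagChr_coord_left (E L : Fin n → ℝ → ℝ) (k j : Fin n) {y : ℝ} (hm : E m y ≠ 0) :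
    diagChr m E L k m j y = if j = k then L k y else 0 := by
  by_cases hj : j = m
  · subst hj
    by_cases hk : k = j <;> simp [diagChr, hk, hm, eq_comm]
  · simp [diagChr, hj, Ne.symm hj]

lemma diagChr_self_left (E L : Fin n → ℝ → ℝ) (k j : Fin n) {y : ℝ} (hm : E m y ≠ 0) :
    diagChr m E L k k j y = if j = m then L k y else 0 := by
  by_cases hk : k = m
  · subst hk
    exact diagChr_coord_left E L k j hm
  · simp [diagChr, hk]

lemma sum_diagChr_mul_coord (E L : Fin n → ℝ → ℝ) (j : Fin n) {y : ℝ} (hm : E m y ≠ 0) :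
    ∑ k, ∑ l, diagChr m E L k j l y * diagChr m E L l m k y =
      if j = m then ∑ k, L k y ^ 2 else 0 := by
  simp only [diagChr_coord_left E L _ _ hm, mul_ite, mul_zero, Finset.sum_ite_eq, Finset.mem_univ,
    if_true, diagChr_comm E L _ j, diagChr_self_left E L _ _ hm, ite_mul, zero_mul, ← sq]
  split_ifs <;> simp

lemma sum_diagChr_mul_diagChr (E L : Fin n → ℝ → ℝ) (i j : Fin n) {y : ℝ} (hm : E m y ≠ 0) :
    ∑ k, ∑ l, diagChr m E L k j l y * diagChr m E L l i k y =
      if i = j then if i = m then ∑ k, L k y ^ 2 else -2 * (E i y / E m y * L i y ^ 2) else 0 := by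
  by_cases hi : i = m
  · subst hi
    simp [sum_diagChr_mul_coord E L j hm, eq_comm]
  by_cases hj : j = m
  · subst hj
    rw [Finset.sum_comm]
    simp only [mul_comm (diagChr _ _ _ _ j _ _), sum_diagChr_mul_coord E L i hm, hi, if_false]
  · simp only [diagChr, hi, hj, false_and, if_false, zero_add, ite_and, sub_mul, mul_sub,
      Finset.sum_sub_distrib, ite_mul, zero_mul, mul_ite, mul_zero, Finset.sum_ite_eq,
      Finset.sum_ite_eq', Finset.mem_univ, if_true]
    by_cases hij : i = j
    · subst hij
      simp only [Finset.sum_ite_irrel, Finset.sum_ite_eq, Finset.sum_ite_eq', Finset.sum_const_zero,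
        Finset.mem_univ, if_true, hi, if_false]
      ring
    · simp [hi, hij, Ne.symm hij]

lemma hasDerivAt_diagChr {L' : Fin n → ℝ} {y : ℝ} (hm : E m y ≠ 0)
    (hL : ∀ k, HasDerivAt (E k) (2 * E k y * L k y) y)
    (hL' : ∀ k, HasDerivAt (L k) (L' k) y) (k i j : Fin n) :
    HasDerivAt (diagChr m E L k i j)
      ((if i = m ∧ j = k then L' k else 0) + (if j = m ∧ i = k then L' k else 0)
        - if k = m ∧ i = j then E i y / E m y * (L' i + 2 * L i y * (L i y - L m y)) else 0) y := by
  have hL₀ (P : Prop) [Decidable P] :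
      HasDerivAt (fun y => if P then L k y else 0) (if P then L' k else 0) y := by
    split_ifs
    exacts [hL' k, hasDerivAt_const y 0]
  refine ((hL₀ _).add (hL₀ _)).sub ?_
  have hratio : HasDerivAt (fun y => E i y / E m y) (2 * (E i y / E m y) * (L i y - L m y)) y :=
    ((hL i).div (hL m) hm).congr_deriv (by field_simp)
  split_ifs
  · exact (hratio.mul (hL' i)).congr_deriv (by ring)
  · exact hasDerivAt_const y 0

lemma pd_chr_diagM {L' : Fin n → ℝ} (hE : ∀ k, E k (p m) ≠ 0)
    (hL : ∀ k, ∀ᶠ y in 𝓝 (p m), HasDerivAt (E k) (2 * E k y * L k y) y)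
    (hL' : ∀ k, HasDerivAt (L k) (L' k) (p m)) (l k i j : Fin n) :
    pd l (fun q => chr (diagM m E) k i j q) p = if l = m then
      (if i = m ∧ j = k then L' k else 0) + (if j = m ∧ i = k then L' k else 0)
        - (if k = m ∧ i = j then E i (p m) / E m (p m) *
            (L' i + 2 * L i (p m) * (L i (p m) - L m (p m))) else 0)
      else 0 := by
  have hL_self k := (hL k).self_of_nhds
  have hE_near : ∀ᶠ y in 𝓝 (p m), ∀ k, E k y ≠ 0 :=
    Filter.eventually_all.mpr fun k => (hL_self k).continuousAt.eventually_ne (hE k)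
  have hchr : (fun q => chr (diagM m E) k i j q) =ᶠ[𝓝 p] fun q => diagChr m E L k i j (q m) := by
    filter_upwards [(continuous_apply m).continuousAt.eventually
      (hE_near.and (Filter.eventually_all.mpr hL))] with q hq
    exact chr_diagM hq.1 hq.2 k i j
  rw [pd_congr l hchr, pd_comp_apply l m (hasDerivAt_diagChr (hE m) hL_self hL' k i j)]

lemma sum_pd_chr_diagM {L' : Fin n → ℝ} (hE : ∀ k, E k (p m) ≠ 0)
    (hL : ∀ k, ∀ᶠ y in 𝓝 (p m), HasDerivAt (E k) (2 * E k y * L k y) y)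
    (hL' : ∀ k, HasDerivAt (L k) (L' k) (p m)) (i j : Fin n) :
    ∑ k, pd k (fun q => chr (diagM m E) k i j q) p = if i = j then
      if i = m then L' m
      else -(E i (p m) / E m (p m) * (L' i + 2 * L i (p m) * (L i (p m) - L m (p m))))
      else 0 := by
  have hm := hE m
  simp only [pd_chr_diagM hE hL hL', Finset.sum_ite_eq', Finset.mem_univ, if_true, true_and]
  by_cases hij : i = j
  · subst hij
    by_cases hi : i = m <;> simp [hi, hm]
  · have hm_excl : ¬(i = m ∧ j = m) := fun h => hij (h.1.trans h.2.symm)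
    simp [hij, hm_excl, and_comm]

lemma sum_pd_chr_self_diagM {L' : Fin n → ℝ} (hE : ∀ k, E k (p m) ≠ 0)
    (hL : ∀ k, ∀ᶠ y in 𝓝 (p m), HasDerivAt (E k) (2 * E k y * L k y) y)
    (hL' : ∀ k, HasDerivAt (L k) (L' k) (p m)) (i j : Fin n) :
    ∑ k, pd j (fun q => chr (diagM m E) k i k q) p =
      if i = m ∧ j = m then ∑ k, L' k else 0 := by
  have hterm k : pd j (fun q => chr (diagM m E) k i k q) p = if i = m ∧ j = m then L' k else 0 := by
    have hm := hE m
    rw [pd_chr_diagM hE hL hL']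
    by_cases hi : i = m <;> by_cases hk : k = m <;> simp [hi, hk, hm, eq_comm]
  simp only [hterm]
  split_ifs <;> simp

lemma RicciT_diagM {L' : Fin n → ℝ} (hE : ∀ k, E k (p m) ≠ 0)
    (hL : ∀ k, ∀ᶠ y in 𝓝 (p m), HasDerivAt (E k) (2 * E k y * L k y) y)
    (hL' : ∀ k, HasDerivAt (L k) (L' k) (p m)) (i j : Fin n) :
    RicciT (diagM m E) i j p = if i = j then
      if i = m then L' m - ∑ k, (L' k + L k (p m) ^ 2 - L m (p m) * L k (p m))
      else -(E i (p m) / E m (p m) * (L' i + (∑ k, L k (p m) - 2 * L m (p m)) * L i (p m)))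
      else 0 := by
  have hchr k i j := chr_diagM (m := m) hE (fun k => (hL k).self_of_nhds) k i j
  have htrace : ∑ k, ∑ l, diagChr m E L k k l (p m) * diagChr m E L l i j (p m) =
      (∑ k, L k (p m)) * diagChr m E L m i j (p m) := by
    simp [diagChr_self_left _ _ _ _ (hE m), Finset.sum_mul]
  simp only [RicciT, sum_pd_chr_diagM hE hL hL', sum_pd_chr_self_diagM hE hL hL', hchr, htrace,
    sum_diagChr_mul_diagChr E L i j (hE m)]
  by_cases hi : i = m
  · subst hi
    rw [diagChr_coord_left E L i j (hE i)]
    by_cases hij : j = i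
    · simp only [hij, if_true, and_self, Finset.sum_sub_distrib, Finset.sum_add_distrib,
        ← Finset.mul_sum]
      ring
    · simp [hij, Ne.symm hij]
  · by_cases hij : i = j
    · simp only [diagChr, ← hij, hi, and_self, if_true, if_false]
      ring
    · simp [diagChr, hi, hij]

lemma RicciT_diagM_eq_mul {L' : Fin n → ℝ} {r : ℝ} (hE : ∀ k, E k (p m) ≠ 0)
    (hL : ∀ k, ∀ᶠ y in 𝓝 (p m), HasDerivAt (E k) (2 * E k y * L k y) y)
    (hL' : ∀ k, HasDerivAt (L k) (L' k) (p m))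
    (hm : L' m - ∑ k, (L' k + L k (p m) ^ 2 - L m (p m) * L k (p m)) = r * E m (p m))
    (hne : ∀ i ≠ m, L' i + (∑ k, L k (p m) - 2 * L m (p m)) * L i (p m) = -(r * E m (p m)))
    (i j : Fin n) : RicciT (diagM m E) i j p = r * diagM m E p i j := by
  have hEm := hE m
  rw [RicciT_diagM hE hL hL', diagM]
  by_cases hij : i = j
  · by_cases hi : i = m
    · rw [if_pos hij, if_pos hi, hm, if_pos hij, hi]
    · rw [if_pos hij, if_neg hi, hne i hi, if_pos hij]
      field_simp
  · rw [if_neg hij, if_neg hij, mul_zero]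

end DiagonalMetrics

section DeSitter

open Real Topology

lemma cot_mul_sin {y : ℝ} (hs : sin y ≠ 0) : cot y * sin y = cos y := by
  rw [cot_eq_cos_div_sin, div_mul_cancel₀ _ hs]

lemma hasDerivAt_cot {y : ℝ} (hs : sin y ≠ 0) : HasDerivAt cot (-1 - cot y ^ 2) y := by
  have hratio : HasDerivAt (fun y => cos y / sin y) (-1 - (cos y / sin y) ^ 2) y :=
    ((hasDerivAt_cos y).div (hasDerivAt_sin y) hs).congr_deriv (by field_simp)
  simpa only [← cot_eq_cos_div_sin] using hratio

/-- The coefficients `−κ² cos² y`, `κ²`, `κ² sin² y` of the de Sitter metric. -/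
def deSitterCoeff (κ : ℝ) : Fin 3 → ℝ → ℝ :=
  ![fun y => -(κ ^ 2 * cos y ^ 2), fun _ => κ ^ 2, fun y => κ ^ 2 * sin y ^ 2]

/-- Half the logarithmic derivatives of `deSitterCoeff κ`. -/
def deSitterLogDeriv : Fin 3 → ℝ → ℝ :=
  ![fun y => -tan y, fun _ => 0, cot]

variable {κ : ℝ} {p : Pt 3}

lemma deSitterM_eq_diagM (κ : ℝ) : deSitterM κ = diagM 1 (deSitterCoeff κ) := by
  ext p i j
  fin_cases i <;> fin_cases j <;> simp [deSitterM, diagM, deSitterCoeff]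

lemma deSitterCoeff_ne_zero {y : ℝ} (hκ : κ ≠ 0) (hc : cos y ≠ 0) (hs : sin y ≠ 0) (k : Fin 3) :
    deSitterCoeff κ k y ≠ 0 := by
  fin_cases k <;> simp [deSitterCoeff, hκ, hc, hs]

lemma hasDerivAt_deSitterCoeff {y : ℝ} (κ : ℝ) (hc : cos y ≠ 0) (hs : sin y ≠ 0) (k : Fin 3) :
    HasDerivAt (deSitterCoeff κ k) (2 * deSitterCoeff κ k y * deSitterLogDeriv k y) y := by
  have hx : HasDerivAt (fun y => -(κ ^ 2 * cos y ^ 2))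
      (2 * -(κ ^ 2 * cos y ^ 2) * -tan y) y := by
    refine (((hasDerivAt_cos y).pow 2).const_mul (κ ^ 2)).neg.congr_deriv ?_
    rw [← tan_mul_cos hc]
    ring
  have hy : HasDerivAt (fun _ : ℝ => κ ^ 2) (2 * κ ^ 2 * 0) y :=
    (hasDerivAt_const y (κ ^ 2)).congr_deriv (mul_zero _).symm
  have hz : HasDerivAt (fun y => κ ^ 2 * sin y ^ 2) (2 * (κ ^ 2 * sin y ^ 2) * cot y) y := by
    refine (((hasDerivAt_sin y).pow 2).const_mul (κ ^ 2)).congr_deriv ?_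
    rw [← cot_mul_sin hs]
    ring
  fin_cases k
  exacts [hx, hy, hz]

lemma eventually_hasDerivAt_deSitterCoeff {y : ℝ} (κ : ℝ) (hc : cos y ≠ 0) (hs : sin y ≠ 0)
    (k : Fin 3) : ∀ᶠ y in 𝓝 y,
      HasDerivAt (deSitterCoeff κ k) (2 * deSitterCoeff κ k y * deSitterLogDeriv k y) y := by
  filter_upwards [continuous_cos.continuousAt.eventually_ne hc,
    continuous_sin.continuousAt.eventually_ne hs] with y hc hs
  exact hasDerivAt_deSitterCoeff κ hc hs k

lemma hasDerivAt_deSitterLogDeriv {y : ℝ} (hc : cos y ≠ 0) (hs : sin y ≠ 0) (k : Fin 3) :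
    HasDerivAt (deSitterLogDeriv k) (![-1 - tan y ^ 2, 0, -1 - cot y ^ 2] k) y := by
  have htan : HasDerivAt (fun y => -tan y) (-1 - tan y ^ 2) y := by
    refine (hasDerivAt_tan hc).neg.congr_deriv ?_
    rw [← inv_one_add_tan_sq hc]
    field_simp
    ring
  fin_cases k
  exacts [htan, hasDerivAt_const y 0, hasDerivAt_cot hs]

lemma RicciT_deSitterM (hκ : κ ≠ 0) (hc : cos (p 1) ≠ 0) (hs : sin (p 1) ≠ 0) (i j : Fin 3) :
    RicciT (deSitterM κ) i j p = 2 / κ ^ 2 * deSitterM κ p i j := by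
  have htan_cot : tan (p 1) * cot (p 1) = 1 := by
    rw [tan_eq_sin_div_cos, cot_eq_cos_div_sin]
    field_simp
  have htwo : 2 / κ ^ 2 * deSitterCoeff κ 1 (p 1) = 2 := div_mul_cancel₀ 2 (pow_ne_zero 2 hκ)
  rw [deSitterM_eq_diagM]
  refine RicciT_diagM_eq_mul (deSitterCoeff_ne_zero hκ hc hs)
    (eventually_hasDerivAt_deSitterCoeff κ hc hs) (hasDerivAt_deSitterLogDeriv hc hs) ?_ ?_ i j
  · rw [htwo, Fin.sum_univ_three]
    change (0 : ℝ) - (-1 - tan (p 1) ^ 2 + (-tan (p 1)) ^ 2 - 0 * -tan (p 1) + (0 + 0 ^ 2 - 0 * 0)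
      + (-1 - cot (p 1) ^ 2 + cot (p 1) ^ 2 - 0 * cot (p 1))) = 2
    ring
  · rw [htwo, Fin.sum_univ_three]
    intro k hk
    fin_cases k
    · change -1 - tan (p 1) ^ 2 + (-tan (p 1) + 0 + cot (p 1) - 2 * 0) * -tan (p 1) = -2
      linear_combination -htan_cot
    · exact absurd rfl hk
    · change -1 - cot (p 1) ^ 2 + (-tan (p 1) + 0 + cot (p 1) - 2 * 0) * cot (p 1) = -2
      linear_combination -htan_cot

lemma Hess_deSitterM {ψ ψ' : ℝ → ℝ} (a : ℝ) (hκ : κ ≠ 0) (hc : cos (p 1) ≠ 0)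
    (hs : sin (p 1) ≠ 0) (hψ : ∀ z, HasDerivAt ψ (ψ' z) z) (hψ' : HasDerivAt ψ' (-ψ (p 2)) (p 2))
    (i j : Fin 3) :
    Hess (deSitterM κ) (fun q => a + sin (q 1) * ψ (q 2)) i j p =
      -(sin (p 1) * ψ (p 2)) / κ ^ 2 * deSitterM κ p i j := by
  have htan : tan (p 1) * cos (p 1) = sin (p 1) := tan_mul_cos hc
  have hcot : cot (p 1) * sin (p 1) = cos (p 1) := cot_mul_sin hs
  rw [deSitterM_eq_diagM, Hess_diagM_const_add_mul a (by decide) (deSitterCoeff_ne_zero hκ hc hs)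
    (hasDerivAt_deSitterCoeff κ hc hs) hasDerivAt_sin (hasDerivAt_cos (p 1))
    hψ hψ' hcot.symm, diagM]
  by_cases hij : i = j
  · rw [if_pos hij, if_pos hij]
    fin_cases i
    · change -(κ ^ 2 * cos (p 1) ^ 2) / κ ^ 2 * -tan (p 1) * (cos (p 1) * ψ (p 2)) + 0 + 0 =
        -(sin (p 1) * ψ (p 2)) / κ ^ 2 * -(κ ^ 2 * cos (p 1) ^ 2)
      rw [← htan]
      field_simp
      ring
    · change κ ^ 2 / κ ^ 2 * 0 * (cos (p 1) * ψ (p 2)) + (-sin (p 1) - 2 * 0 * cos (p 1)) * ψ (p 2)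
        + 0 = -(sin (p 1) * ψ (p 2)) / κ ^ 2 * κ ^ 2
      field_simp
      ring
    · change κ ^ 2 * sin (p 1) ^ 2 / κ ^ 2 * cot (p 1) * (cos (p 1) * ψ (p 2)) + 0
        + sin (p 1) * -ψ (p 2) = -(sin (p 1) * ψ (p 2)) / κ ^ 2 * (κ ^ 2 * sin (p 1) ^ 2)
      field_simp
      linear_combination sin (p 1) * ψ (p 2) * (cos (p 1) * hcot + cos_sq' (p 1))
  · rw [if_neg hij, if_neg hij, mul_zero]

lemma gradNorm2_deSitterM {ψ : ℝ → ℝ} {ψ' : ℝ} (a : ℝ) (hκ : κ ≠ 0) (hc : cos (p 1) ≠ 0)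
    (hs : sin (p 1) ≠ 0) (hψ : HasDerivAt ψ ψ' (p 2)) :
    gradNorm2 (deSitterM κ) (fun q => a + sin (q 1) * ψ (q 2)) p =
      1 / κ ^ 2 * (cos (p 1) ^ 2 * ψ (p 2) ^ 2 + ψ' ^ 2) := by
  have hpd k := pd_const_add_mul a k 1 2 (hasDerivAt_sin (p 1)) hψ
  rw [deSitterM_eq_diagM, gradNorm2_diagM (deSitterCoeff_ne_zero hκ hc hs), Fin.sum_univ_three,
    hpd, hpd, hpd]
  change (0 + 0) ^ 2 / -(κ ^ 2 * cos (p 1) ^ 2) + (cos (p 1) * ψ (p 2) + 0) ^ 2 / κ ^ 2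
    + (0 + sin (p 1) * ψ') ^ 2 / (κ ^ 2 * sin (p 1) ^ 2) = _
  field_simp
  ring

lemma isSymm_deSitterM (κ : ℝ) (p : Pt 3) : (Matrix.of (deSitterM κ p)).IsSymm := by
  rw [deSitterM_eq_diagM]
  exact isSymm_diagM 1 (deSitterCoeff κ) p

lemma isUnit_det_deSitterM (hκ : κ ≠ 0) (hc : cos (p 1) ≠ 0) (hs : sin (p 1) ≠ 0) :
    IsUnit (Matrix.of (deSitterM κ p)).det := by
  rw [deSitterM_eq_diagM]
  exact isUnit_det_diagM (deSitterCoeff_ne_zero hκ hc hs)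

lemma Scal_deSitterM (hκ : κ ≠ 0) (hc : cos (p 1) ≠ 0) (hs : sin (p 1) ≠ 0) :
    Scal (deSitterM κ) p = 6 / κ ^ 2 := by
  rw [Scal, sum_ginv_mul_of_eq_smul_metric (isSymm_deSitterM κ p) (isUnit_det_deSitterM hκ hc hs)
    (RicciT_deSitterM hκ hc hs)]
  push_cast
  ring

lemma WEFEat_deSitterM {ψ ψ' : ℝ → ℝ} (Λ : ℝ) (hκ : κ ≠ 0) (hc : cos (p 1) ≠ 0)
    (hs : sin (p 1) ≠ 0) (hψ : ∀ z, HasDerivAt ψ (ψ' z) z) (hψ' : HasDerivAt ψ' (-ψ (p 2)) (p 2)) :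
    WEFEat (deSitterM κ) (fun q => -(κ ^ 2 * Λ) / 2 + sin (q 1) * ψ (q 2)) Λ p := by
  refine WEFEat_of_einstein (isSymm_deSitterM κ p) (isUnit_det_deSitterM hκ hc hs)
    (RicciT_deSitterM hκ hc hs) (Hess_deSitterM _ hκ hc hs hψ hψ') ?_
  push_cast
  field_simp
  ring

lemma hasDerivAt_mul_cos_add_mul_sin (c₁ c₂ z : ℝ) :
    HasDerivAt (fun z => c₁ * cos z + c₂ * sin z) (c₂ * cos z - c₁ * sin z) z :=
  (((hasDerivAt_cos z).const_mul c₁).add ((hasDerivAt_sin z).const_mul c₂)).congr_deriv (by ring)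

lemma hasDerivAt_mul_cos_sub_mul_sin (c₁ c₂ z : ℝ) :
    HasDerivAt (fun z => c₂ * cos z - c₁ * sin z) (-(c₁ * cos z + c₂ * sin z)) z :=
  (((hasDerivAt_cos z).const_mul c₂).sub ((hasDerivAt_sin z).const_mul c₁)).congr_deriv (by ring)

end DeSitter

/-- On de Sitter 3-space (at points with `cos y ≠ 0` and
`sin y ≠ 0`) the scalar curvature is `6/κ²`, and for any constants `c₁, c₂`
and any `Λ`, the function `h = −κ²Λ/2 + sin y (c₁ cos z + c₂ sin z)`
satisfies the vacuum weighted Einstein field equation; moreover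
`‖∇h‖² = (1/κ²)(cos²y (c₂ sin z + c₁ cos z)² + (c₂ cos z − c₁ sin z)²) ≥ 0`,
so `∇h` is spacelike or lightlike. -/
theorem deSitter_solutions (κ Λ c₁ c₂ : ℝ) (hκ : 0 < κ) :
    ∀ p : Pt 3, Real.cos (p 1) ≠ 0 → Real.sin (p 1) ≠ 0 →
      Scal (deSitterM κ) p = 6 / κ^2 ∧
      WEFEat (deSitterM κ)
        (fun q => -(κ^2 * Λ) / 2 +
          Real.sin (q 1) * (c₁ * Real.cos (q 2) + c₂ * Real.sin (q 2))) Λ p ∧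
      gradNorm2 (deSitterM κ)
        (fun q => -(κ^2 * Λ) / 2 +
          Real.sin (q 1) * (c₁ * Real.cos (q 2) + c₂ * Real.sin (q 2))) p =
        (1 / κ^2) * (Real.cos (p 1)^2 *
            (c₂ * Real.sin (p 2) + c₁ * Real.cos (p 2))^2
          + (c₂ * Real.cos (p 2) - c₁ * Real.sin (p 2))^2) ∧
      0 ≤ gradNorm2 (deSitterM κ)
        (fun q => -(κ^2 * Λ) / 2 +
          Real.sin (q 1) * (c₁ * Real.cos (q 2) + c₂ * Real.sin (q 2))) p := by
  intro p hc hs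
  have hκ₀ : κ ≠ 0 := hκ.ne'
  have hψ := hasDerivAt_mul_cos_add_mul_sin c₁ c₂
  have hψ' := hasDerivAt_mul_cos_sub_mul_sin c₁ c₂
  have hgrad := (gradNorm2_deSitterM (-(κ ^ 2 * Λ) / 2) hκ₀ hc hs (hψ (p 2))).trans
    (congrArg (fun c => 1 / κ ^ 2 * (Real.cos (p 1) ^ 2 * c ^ 2 + _)) (add_comm _ _))
  refine ⟨Scal_deSitterM hκ₀ hc hs, WEFEat_deSitterM Λ hκ₀ hc hs hψ (hψ' (p 2)), hgrad, ?_⟩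
  rw [hgrad]
  positivity
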